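/- Majority dynamics enables negative Condorcet-winner control: for every profile P that has no Condorcet winner, either there exists an update order σ such that MD_σ(P) has no Condorcet winner, or there exist update orders σ and σ' such that the Condorcet winners of MD_σ(P) and MD_σ'(P) both exist and are distinct. -/

import Mathlib

attribute [local instance] Classical.propDecidable

noncomputable section

/-- A preference over the set of alternatives `A`: a binary relation. -/
abbrev Pref (A : Type) := A → A → Prop

/-- A preference is a strict partial order: irreflexive and transitive. -/
def IsPref {A : Type} (pref : Pref A) : Prop :=
  Irreflexive pref ∧ Transitive pref

variable {A : Type} [Fintype A] [DecidableEq A]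

/-- The support `n_P(ab)`: the number of agents preferring `a` to `b` in profile `P`. -/
def support {n : ℕ} (P : Fin n → Pref A) (a b : A) : ℕ :=
  (Finset.univ.filter fun i => P i a b).card

/-- An update order: a list of ordered pairs of distinct alternatives containing,
for each unordered pair `{a, b}` of distinct alternatives, exactly one of `ab` or `ba`,
each exactly once. -/
def IsUpdateOrder (σ : List (A × A)) : Prop :=
  (∀ p ∈ σ, p.1 ≠ p.2) ∧
  (∀ a b : A, a ≠ b → σ.count (a, b) + σ.count (b, a) = 1)

/-- One step of majority dynamics, discussing the pair `p`: agents already ranking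
`p.1` versus `p.2` keep their preference; every other agent adds `p.1 ≻ p.2` if
`n_P(p.1 p.2) ≥ n_P(p.2 p.1)` (ties broken in favour of the first alternative of the
pair), and otherwise adds `p.2 ≻ p.1`, then takes the transitive closure. -/
def mdStep {n : ℕ} (P : Fin n → Pref A) (p : A × A) : Fin n → Pref A :=
  fun i =>
    if P i p.1 p.2 ∨ P i p.2 p.1 then P i
    else if support P p.2 p.1 ≤ support P p.1 p.2 then
      Relation.TransGen (fun x y => P i x y ∨ (x = p.1 ∧ y = p.2))
    else
      Relation.TransGen (fun x y => P i x y ∨ (x = p.2 ∧ y = p.1))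

/-- Majority dynamics `MD_σ(P)`: process the pairs of the update order `σ` in order. -/
def MD {n : ℕ} (σ : List (A × A)) (P : Fin n → Pref A) : Fin n → Pref A :=
  σ.foldl mdStep P

/-- `a` is a Condorcet winner in `P`. -/
def CondorcetWinner {n : ℕ} (P : Fin n → Pref A) (a : A) : Prop :=
  ∀ b, b ≠ a → support P b a < support P a b

/-- `a` is a Condorcet loser in `P`. -/
def CondorcetLoser {n : ℕ} (P : Fin n → Pref A) (a : A) : Prop :=
  ∀ b, b ≠ a → support P a b < support P b a

/-- `a` is undominated in a preference. -/
def Undominated {A : Type} (pref : Pref A) (a : A) : Prop := ∀ b, ¬ pref b a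

/-- `a` is dominant in a preference. -/
def Dominant {A : Type} (pref : Pref A) (a : A) : Prop := ∀ b, b ≠ a → pref a b

/-- `a` is dominated (by every other alternative) in a preference. -/
def DominatedIn {A : Type} (pref : Pref A) (a : A) : Prop := ∀ b, b ≠ a → pref b a

/-- Number of preferences of `P` in which `a` is undominated. -/
def udCount {n : ℕ} (P : Fin n → Pref A) (a : A) : ℕ :=
  (Finset.univ.filter fun i => Undominated (P i) a).card

/-- Number of preferences of `P` in which `a` is dominant. -/
def domCount {n : ℕ} (P : Fin n → Pref A) (a : A) : ℕ :=
  (Finset.univ.filter fun i => Dominant (P i) a).card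

/-- Number of preferences of `P` in which `a` is dominated. -/
def domdCount {n : ℕ} (P : Fin n → Pref A) (a : A) : ℕ :=
  (Finset.univ.filter fun i => DominatedIn (P i) a).card

/-- `a` is undominated in at least one preference and no alternative is undominated
in strictly more preferences than `a`. -/
def PlurUDTop {n : ℕ} (P : Fin n → Pref A) (a : A) : Prop :=
  0 < udCount P a ∧ ∀ b, udCount P b ≤ udCount P a

/-- `a` is the PlurUD-consensus alternative of `P`. -/
def PlurUDConsensus {n : ℕ} (P : Fin n → Pref A) (a : A) : Prop :=
  PlurUDTop P a ∧ ∀ b, PlurUDTop P b → b = a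

/-- `a` is dominant in at least one preference and no alternative is dominant
in strictly more preferences than `a`. -/
def PlurDomTop {n : ℕ} (P : Fin n → Pref A) (a : A) : Prop :=
  0 < domCount P a ∧ ∀ b, domCount P b ≤ domCount P a

/-- `a` is the PlurDom-consensus alternative of `P`. -/
def PlurDomConsensus {n : ℕ} (P : Fin n → Pref A) (a : A) : Prop :=
  PlurDomTop P a ∧ ∀ b, PlurDomTop P b → b = a

/-- `a` is dominated in at least one preference and no alternative is dominated
in strictly more preferences than `a`. -/
def PlurDomdTop {n : ℕ} (P : Fin n → Pref A) (a : A) : Prop :=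
  0 < domdCount P a ∧ ∀ b, domdCount P b ≤ domdCount P a

/-- `a` is the (unique) plurality dominated alternative of `P`. -/
def PlurDomdConsensus {n : ℕ} (P : Fin n → Pref A) (a : A) : Prop :=
  PlurDomdTop P a ∧ ∀ b, PlurDomdTop P b → b = a

/-- `a` is the MajUD-consensus alternative of `P`: undominated in strictly more than
`n / 2` of the preferences, and the unique alternative with this property. -/
def MajUDConsensus {n : ℕ} (P : Fin n → Pref A) (a : A) : Prop :=
  (n < 2 * udCount P a) ∧ ∀ b, n < 2 * udCount P b → b = a

/-- `a` is the MajDom-consensus alternative of `P`: dominant in strictly more than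
`n / 2` of the preferences (such an alternative is automatically unique). -/
def MajDomConsensus {n : ℕ} (P : Fin n → Pref A) (a : A) : Prop :=
  n < 2 * domCount P a

/-- `a` is the UnanUD-consensus alternative of `P`: undominated in every preference,
and the unique alternative with this property. -/
def UnanUDConsensus {n : ℕ} (P : Fin n → Pref A) (a : A) : Prop :=
  (∀ i, Undominated (P i) a) ∧ ∀ b, (∀ i, Undominated (P i) b) → b = a

/-- `a` is the UnanDom-consensus alternative of `P`: dominant in every preference. -/
def UnanDomConsensus {n : ℕ} (P : Fin n → Pref A) (a : A) : Prop :=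
  ∀ i, Dominant (P i) a

/-- A preference is a strict weak ordering: there is an ordered partition of the
alternatives into levels (given by a level function `f`) such that alternatives in the
same level are incomparable, and `a ≻ b` exactly when `a` is in an earlier level. -/
def IsSWO (pref : Pref A) : Prop :=
  ∃ (k : ℕ) (f : A → Fin k), ∀ a b : A, pref a b ↔ f a < f b

/-!
Control is possible one alternative at a time: if `a` is not a Condorcet winner of `P`, then
some `b` has at least as much support against `a` as `a` has against `b`. Discuss the pair `ba`
first. Every agent who does not rank `a` above `b` then ranks `b` above `a`, and keeps doing so
because preferences only grow; hence `a` never gains support against `b` and cannot become a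
Condorcet winner. If every update order elects some alternative, apply this to the alternative
elected by an arbitrary update order: another update order elects a different one.
-/

theorem transGen_or_eq_and_eq_iff {α : Type*} {r : α → α → Prop} {a b x y : α} :
    Relation.TransGen (fun u v => r u v ∨ (u = a ∧ v = b)) x y ↔
      Relation.TransGen r x y ∨ (Relation.ReflTransGen r x a ∧ Relation.ReflTransGen r b y) := by
  constructor
  · intro h
    induction h with
    | single h =>
      rcases h with hxy | ⟨rfl, rfl⟩
      · exact .inl (.single hxy)
      · exact .inr ⟨.refl, .refl⟩
    | tail _ h ih =>
      rcases h with hyz | ⟨rfl, rfl⟩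
      · exact ih.imp (·.tail hyz) fun ⟨hxa, hby⟩ => ⟨hxa, hby.tail hyz⟩
      · exact .inr ⟨ih.elim (·.to_reflTransGen) And.left, .refl⟩
  · have r_le : r ≤ fun u v => r u v ∨ (u = a ∧ v = b) := fun _ _ => .inl
    rintro (hxy | ⟨hxa, hby⟩)
    · exact Relation.TransGen.mono r_le _ _ hxy
    · exact (Relation.TransGen.tail' (Relation.ReflTransGen.mono r_le _ _ hxa)
        (.inr ⟨rfl, rfl⟩)).trans_left (Relation.ReflTransGen.mono r_le _ _ hby)

section Preferences

variable {α : Type}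

/-- The preference of an agent who starts from `r` and adopts the ranking `a ≻ b`: the transitive
closure of `r` with the pair `ab` added, exactly as in `mdStep`. -/
def Pref.adjoin (r : Pref α) (a b : α) : Pref α :=
  Relation.TransGen fun x y => r x y ∨ (x = a ∧ y = b)

theorem Pref.le_adjoin (r : Pref α) (a b : α) : r ≤ r.adjoin a b :=
  fun _ _ h => .single (.inl h)

theorem Pref.adjoin_self (r : Pref α) (a b : α) : r.adjoin a b a b :=
  .single (.inr ⟨rfl, rfl⟩)

theorem IsPref.asymm {r : Pref α} (hr : IsPref r) {a b : α} (hab : r a b) : ¬ r b a :=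
  fun hba => hr.1 a (hr.2 hab hba)

theorem IsPref.adjoin {r : Pref α} (hr : IsPref r) {a b : α} (hab : a ≠ b) (hba : ¬ r b a) :
    IsPref (r.adjoin a b) := by
  have : IsTrans α r := ⟨fun _ _ _ hxy hyz => hr.2 hxy hyz⟩
  refine ⟨fun x hx => ?_, fun _ _ _ hxy hyz => hxy.trans hyz⟩
  rcases transGen_or_eq_and_eq_iff.1 hx with hxx | ⟨hxa, hbx⟩
  · rw [Relation.transGen_eq_self] at hxx
    exact hr.1 x hxx
  · rcases Relation.reflTransGen_iff_eq_or_transGen.1 (hbx.trans hxa) with heq | hlt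
    · exact hab heq
    · rw [Relation.transGen_eq_self] at hlt
      exact hba hlt

end Preferences

section Dynamics

variable {α : Type} {n : ℕ} {P Q : Fin n → Pref α}

theorem mdStep_apply (P : Fin n → Pref α) (p : α × α) (i : Fin n) :
    mdStep P p i =
      if P i p.1 p.2 ∨ P i p.2 p.1 then P i
      else if support P p.2 p.1 ≤ support P p.1 p.2 then (P i).adjoin p.1 p.2
      else (P i).adjoin p.2 p.1 :=
  rfl

theorem le_mdStep (P : Fin n → Pref α) (p : α × α) : P ≤ mdStep P p := by
  intro i
  rw [mdStep_apply]
  split_ifs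
  · exact le_rfl
  · exact (P i).le_adjoin _ _
  · exact (P i).le_adjoin _ _

theorem isPref_mdStep (hP : ∀ i, IsPref (P i)) {p : α × α} (hp : p.1 ≠ p.2) (i : Fin n) :
    IsPref (mdStep P p i) := by
  rw [mdStep_apply]
  split_ifs with hranked
  · exact hP i
  · exact (hP i).adjoin hp fun h => hranked (.inr h)
  · exact (hP i).adjoin hp.symm fun h => hranked (.inl h)

theorem mdStep_of_support_le {a b : α} (hle : support P b a ≤ support P a b) {i : Fin n}
    (hba : ¬ P i b a) : mdStep P (a, b) i a b := by
  by_cases hab : P i a b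
  · exact le_mdStep P (a, b) i a b hab
  · rw [mdStep_apply, if_neg (not_or.2 ⟨hab, hba⟩), if_pos hle]
    exact (P i).adjoin_self a b

theorem le_MD (σ : List (α × α)) (P : Fin n → Pref α) : P ≤ MD σ P := by
  induction σ generalizing P with
  | nil => exact le_rfl
  | cons p σ ih => exact (le_mdStep P p).trans (ih (mdStep P p))

theorem isPref_MD {σ : List (α × α)} (hσ : ∀ p ∈ σ, p.1 ≠ p.2) (hP : ∀ i, IsPref (P i)) :
    ∀ i, IsPref (MD σ P i) := by
  induction σ generalizing P with
  | nil => exact hP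
  | cons p σ ih =>
    rw [List.forall_mem_cons] at hσ
    exact ih hσ.2 (isPref_mdStep hP hσ.1)

theorem support_mono (hPQ : P ≤ Q) (a b : α) : support P a b ≤ support Q a b :=
  Finset.card_le_card (Finset.monotone_filter_right _ fun i _ => hPQ i a b)

theorem support_MD_cons_le {σ : List (α × α)} {a b : α} (hσ : ∀ p ∈ (a, b) :: σ, p.1 ≠ p.2)
    (hP : ∀ i, IsPref (P i)) (hle : support P b a ≤ support P a b) :
    support (MD ((a, b) :: σ) P) b a ≤ support P b a := by
  refine Finset.card_le_card (Finset.monotone_filter_right _ fun i _ hba => ?_)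
  by_contra hPba
  have hab : MD ((a, b) :: σ) P i a b :=
    le_MD σ (mdStep P (a, b)) i a b (mdStep_of_support_le hle hPba)
  exact (isPref_MD hσ hP i).asymm hab hba

theorem not_condorcetWinner_MD_cons {σ : List (α × α)} {a b : α}
    (hσ : ∀ p ∈ (b, a) :: σ, p.1 ≠ p.2) (hP : ∀ i, IsPref (P i))
    (hle : support P a b ≤ support P b a) :
    ¬ CondorcetWinner (MD ((b, a) :: σ) P) a := by
  intro hwin
  refine (hwin b (List.forall_mem_cons.1 hσ).1).not_ge ?_
  calc support (MD ((b, a) :: σ) P) a b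
      ≤ support P a b := support_MD_cons_le hσ hP hle
    _ ≤ support P b a := hle
    _ ≤ support (MD ((b, a) :: σ) P) b a := support_mono (le_MD _ P) b a

end Dynamics

section UpdateOrders

variable {α : Type} [DecidableEq α] {σ τ : List (α × α)}

theorem IsUpdateOrder.perm (hσ : IsUpdateOrder σ) (h : σ.Perm τ) : IsUpdateOrder τ :=
  ⟨fun p hp => hσ.1 p (h.mem_iff.2 hp), fun a b hab => by
    rw [← h.count_eq, ← h.count_eq, hσ.2 a b hab]⟩

theorem IsUpdateOrder.map_swap (hσ : IsUpdateOrder σ) : IsUpdateOrder (σ.map Prod.swap) := by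
  have count_swap (a b : α) : (σ.map Prod.swap).count (a, b) = σ.count (b, a) :=
    List.count_map_of_injective σ Prod.swap Prod.swap_injective (b, a)
  refine ⟨List.forall_mem_map.2 fun p hp => (hσ.1 p hp).symm, fun a b hab => ?_⟩
  rw [count_swap, count_swap, hσ.2 b a hab.symm]

theorem IsUpdateOrder.mem_or_swap_mem (hσ : IsUpdateOrder σ) {a b : α} (hab : a ≠ b) :
    (a, b) ∈ σ ∨ (b, a) ∈ σ := by
  have hcount := hσ.2 a b hab
  simp only [← List.count_pos_iff]
  omega

variable (α) in
theorem exists_isUpdateOrder [Finite α] : ∃ σ : List (α × α), IsUpdateOrder σ := by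
  have := Fintype.ofFinite α
  let e := Fintype.equivFin α
  let increasing : Finset (α × α) := {p | e p.1 < e p.2}
  have mem_increasing (a b : α) : (a, b) ∈ increasing.toList ↔ e a < e b := by
    simp [increasing]
  refine ⟨increasing.toList, fun p hp heq => ?_, fun a b hab => ?_⟩
  · exact ((mem_increasing p.1 p.2).1 hp).ne (congrArg e heq)
  · simp only [increasing.nodup_toList.count, mem_increasing]
    rcases (e.injective.ne hab).lt_or_gt with h | h <;> simp [h, h.le]

theorem exists_isUpdateOrder_cons [Finite α] {a b : α} (hab : a ≠ b) :
    ∃ σ : List (α × α), IsUpdateOrder ((a, b) :: σ) := by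
  obtain ⟨σ, hσ, hmem⟩ : ∃ σ : List (α × α), IsUpdateOrder σ ∧ (a, b) ∈ σ := by
    obtain ⟨σ, hσ⟩ := exists_isUpdateOrder α
    rcases hσ.mem_or_swap_mem hab with hmem | hmem
    · exact ⟨σ, hσ, hmem⟩
    · exact ⟨σ.map Prod.swap, hσ.map_swap, List.mem_map_of_mem hmem⟩
  exact ⟨σ.erase (a, b), hσ.perm (List.perm_cons_erase hmem)⟩

theorem exists_isUpdateOrder_not_condorcetWinner_MD [Finite α] {n : ℕ} {P : Fin n → Pref α}
    (hP : ∀ i, IsPref (P i)) {a : α} (ha : ¬ CondorcetWinner P a) :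
    ∃ σ : List (α × α), IsUpdateOrder σ ∧ ¬ CondorcetWinner (MD σ P) a := by
  obtain ⟨b, hba, hle⟩ : ∃ b, b ≠ a ∧ support P a b ≤ support P b a := by
    simpa only [CondorcetWinner, not_forall, not_lt, exists_prop] using ha
  obtain ⟨σ, hσ⟩ := exists_isUpdateOrder_cons hba
  exact ⟨(b, a) :: σ, hσ, not_condorcetWinner_MD_cons hσ.1 hP hle⟩

end UpdateOrders

/-- Majority dynamics enables negative Condorcet-winner control. -/
theorem stmt_19 {n : ℕ} (P : Fin n → Pref A) (hP : ∀ i, IsPref (P i))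
    (hno : ∀ a, ¬ CondorcetWinner P a) :
    (∃ σ : List (A × A), IsUpdateOrder σ ∧ ∀ a, ¬ CondorcetWinner (MD σ P) a) ∨
    (∃ (σ σ' : List (A × A)) (a a' : A), IsUpdateOrder σ ∧ IsUpdateOrder σ' ∧
      CondorcetWinner (MD σ P) a ∧ CondorcetWinner (MD σ' P) a' ∧ a ≠ a') := by
  rw [or_iff_not_imp_left]
  intro hall
  push Not at hall
  obtain ⟨σ, hσ⟩ := exists_isUpdateOrder A
  obtain ⟨a, ha⟩ := hall σ hσ
  obtain ⟨σ', hσ', hna⟩ := exists_isUpdateOrder_not_condorcetWinner_MD hP (hno a)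
  obtain ⟨a', ha'⟩ := hall σ' hσ'
  exact ⟨σ, σ', a, a', hσ, hσ', ha, ha', fun heq => hna (heq ▸ ha')⟩

end
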